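/- Let (G,c,o) be a recurrent rooted network and h a potential on it. Let μ_h be the measure on the neighbors of o defined by μ_h(v)=c_{ov}h(v) for v∼o. Then for every v ∈ S_h={u : h(u)>0}, the Green kernel of the h-process satisfies G^h(μ_h, v) := Σ_x μ_h(x) G^h(x,v) = h(v) · c_v. -/

import Mathlib

open scoped ENNReal
open Filter Topology Classical
noncomputable section

/-- A rooted network: a connected, locally finite simple graph with positive
symmetric edge conductances (extended by `0` to non-edges) and a root `o`. -/
structure RootedNetwork (V : Type*) where
  G : SimpleGraph V
  locallyFinite : ∀ x : V, (G.neighborSet x).Finite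
  connected : G.Connected
  c : V → V → ℝ
  c_symm : ∀ x y, c x y = c y x
  c_pos : ∀ x y, G.Adj x y → 0 < c x y
  c_eq_zero : ∀ x y, ¬ G.Adj x y → c x y = 0
  o : V

namespace RootedNetwork

variable {V : Type*}

/-- The vertex weight `c_x = Σ_{z ∼ x} c_{xz}`. -/
noncomputable def cv (N : RootedNetwork V) (x : V) : ℝ := ∑' y, N.c x y

/-- The transition probability `p(x,y) = c_{xy} / c_x` of the network random walk. -/
noncomputable def p (N : RootedNetwork V) (x y : V) : ℝ≥0∞ :=
  ENNReal.ofReal (N.c x y / N.cv x)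

/-- The probability that the network random walk started at `x` begins with the
given finite sequence of steps. -/
noncomputable def pathProb (N : RootedNetwork V) : V → List V → ℝ≥0∞
  | _, [] => 1
  | x, y :: l => N.p x y * pathProb N y l

/-- The probability, starting from `x`, that the walk ever visits `b`
(`P_x(τ_b < ∞)`), computed by decomposing over the finite path up to the first
visit of `b`. -/
noncomputable def hitProb (N : RootedNetwork V) (x b : V) : ℝ≥0∞ :=
  if x = b then 1
  else ∑' l : {l : List V // l.getLast? = some b ∧ b ∉ l.dropLast}, N.pathProb x l.1

/-- A rooted network is recurrent if the walk started from any vertex almost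
surely visits the root `o`. -/
def Recurrent (N : RootedNetwork V) : Prop := ∀ x : V, N.hitProb x N.o = 1

/-- The Green kernel `G_o(x,y) = Σ_{n ≥ 0} P_x(X_n = y, τ_o > n)` of the walk
killed at the root, computed as a sum over finite paths from `x` to `y`
avoiding `o` (the `n = 0` term is the first summand). -/
noncomputable def GreenKer (N : RootedNetwork V) (x y : V) : ℝ≥0∞ :=
  (if x = y ∧ x ≠ N.o then 1 else 0) +
    ∑' l : {l : List V // l.getLast? = some y ∧ N.o ∉ x :: l}, N.pathProb x l.1

/-- The Green density `g_o(x,y) = G_o(x,y) / c_y`. -/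
noncomputable def greenDensity (N : RootedNetwork V) (x y : V) : ℝ≥0∞ :=
  N.GreenKer x y / ENNReal.ofReal (N.cv y)

/-- The network Laplacian `Δ f (v) = Σ_{x ∼ v} c_{vx} (f(x) - f(v))`. -/
noncomputable def lap (N : RootedNetwork V) (f : V → ℝ) (v : V) : ℝ :=
  ∑' x, N.c v x * (f x - f v)

/-- A potential: a nonnegative function vanishing at `o`, with Laplacian `1`
at `o`, harmonic everywhere else. -/
def IsPotential (N : RootedNetwork V) (h : V → ℝ) : Prop :=
  (∀ v, 0 ≤ h v) ∧ h N.o = 0 ∧ N.lap h N.o = 1 ∧ ∀ v, v ≠ N.o → N.lap h v = 0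

end RootedNetwork
namespace RootedNetwork

variable {V : Type*}

/-- The transition probability `p^h(x,y) = p(x,y) h(y) / h(x)` of the Doob
`h`-process. -/
noncomputable def hp (N : RootedNetwork V) (h : V → ℝ) (x y : V) : ℝ≥0∞ :=
  N.p x y * ENNReal.ofReal (h y / h x)

/-- The probability that the `h`-process started at `x` begins with the given
finite sequence of steps. -/
noncomputable def hPathProb (N : RootedNetwork V) (h : V → ℝ) : V → List V → ℝ≥0∞
  | _, [] => 1
  | x, y :: l => N.hp h x y * hPathProb N h y l

end RootedNetwork
namespace RootedNetwork

/-- The Green kernel `G^h(x,y) = Σ_{k ≥ 0} P^h_x(Y_k = y)` of the `h`-process,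
as a sum over finite paths from `x` to `y` (the `k = 0` term is the first
summand). -/
noncomputable def hGreen {V : Type*} (N : RootedNetwork V) (h : V → ℝ) (x y : V) : ℝ≥0∞ :=
  (if x = y then 1 else 0) +
    ∑' l : {l : List V // l.getLast? = some y}, N.hPathProb h x l.1

end RootedNetwork

/-!
Write `G_o` for the Green kernel of the walk killed at the root. Along a path the factors
`h(y) / h(x)` of the `h`-process telescope, so `h(x) G^h(x,v) = h(v) G_o(x,v)`. The paths through a
zero `x ≠ o` of `h`, which the `h`-process never takes, do not contribute to `G_o(·,v)` either: `h`
is nonnegative and superharmonic at `x`, hence vanishes at all neighbours of `x`, and so the walk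
cannot go from `x` to `v` without visiting the root.
Reversibility `c_x G_o(x,v) = c_v G_o(v,x)` then turns `∑ₓ c_{ox} G_o(x,v)` into
`c_v ∑ₓ G_o(v,x) p(x,o)`, which is `c_v` times the probability of hitting `o` from `v`
(decompose at the last step before hitting). Recurrence makes this probability `1`.
-/

namespace RootedNetwork

variable {V : Type*}

section PathSums

variable {M : Type*} [AddCommMonoid M] [TopologicalSpace M]

lemma tsum_subtype_eq_tsum_ite {α : Type*} (P : α → Prop) [DecidablePred P] (f : α → M) :
    ∑' a : {a // P a}, f a = ∑' a, if P a then f a else 0 :=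
  (tsum_subtype {a | P a} f).trans (tsum_congr fun _ => by simp [Set.indicator_apply])

lemma tsum_getLast?_eq_some_and (y : V) (P : List V → Prop) [DecidablePred P] (f : List V → M) :
    ∑' l : {l : List V // l.getLast? = some y ∧ P l}, f l =
      ∑' k : List V, if P (k ++ [y]) then f (k ++ [y]) else 0 := by
  rw [tsum_subtype_eq_tsum_ite, ← (List.append_left_injective [y]).tsum_eq]
  · simp
  · intro l hl
    have h_last : l.getLast? = some y := by
      by_contra h_ne
      exact hl (if_neg fun h_end => h_ne h_end.1)
    exact ⟨l.dropLast, List.dropLast_append_getLast? y h_last⟩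

lemma ite_add_tsum_getLast?_eq_some (x y : V) (f : List V → ℝ≥0∞) :
    (if x = y then f [] else 0) + ∑' l : {l : List V // l.getLast? = some y}, f l =
      ∑' l : List V, if l.getLastD x = y then f l else 0 := by
  rw [ENNReal.tsum_eq_add_tsum_ite ([] : List V), tsum_subtype_eq_tsum_ite, List.getLastD_nil]
  congr 1
  refine tsum_congr fun l => ?_
  cases l with
  | nil => simp
  | cons a l => simp [List.getLast?_cons]

end PathSums

variable (N : RootedNetwork V)

section Conductances

lemma c_nonneg (x y : V) : 0 ≤ N.c x y := by
  by_cases hxy : N.G.Adj x y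
  · exact (N.c_pos x y hxy).le
  · exact (N.c_eq_zero x y hxy).ge

lemma summable_c_mul (x : V) (f : V → ℝ) : Summable fun y => N.c x y * f y := by
  refine summable_of_hasFiniteSupport ((N.locallyFinite x).subset fun y hy => ?_)
  by_contra hxy
  exact hy (by simp [N.c_eq_zero x y hxy])

lemma cv_nonneg (x : V) : 0 ≤ N.cv x :=
  tsum_nonneg (N.c_nonneg x)

lemma c_le_cv (x y : V) : N.c x y ≤ N.cv x := by
  have summable_c : Summable (N.c x) := by simpa using N.summable_c_mul x fun _ => 1
  exact summable_c.le_tsum y fun z _ => N.c_nonneg x z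

lemma ofReal_cv_mul_p (x y : V) :
    ENNReal.ofReal (N.cv x) * N.p x y = ENNReal.ofReal (N.c x y) := by
  have c_eq_zero_of_cv (hx : N.cv x = 0) : N.c x y = 0 :=
    le_antisymm (hx ▸ N.c_le_cv x y) (N.c_nonneg x y)
  rw [p, ← ENNReal.ofReal_mul (N.cv_nonneg x), mul_div_cancel_of_imp' c_eq_zero_of_cv]

lemma ofReal_cv_mul_p_comm (x y : V) :
    ENNReal.ofReal (N.cv x) * N.p x y = ENNReal.ofReal (N.cv y) * N.p y x := by
  rw [ofReal_cv_mul_p, ofReal_cv_mul_p, N.c_symm]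

end Conductances

section Reversibility

lemma pathProb_concat (x y : V) (l : List V) :
    N.pathProb x (l ++ [y]) = N.pathProb x l * N.p (l.getLastD x) y := by
  induction l generalizing x with
  | nil => simp [pathProb]
  | cons a l ih => rw [List.cons_append, pathProb, pathProb, ih, List.getLastD_cons, mul_assoc]

lemma ofReal_cv_mul_pathProb_reverse (x y : V) (k : List V) :
    ENNReal.ofReal (N.cv x) * N.pathProb x (k ++ [y]) =
      ENNReal.ofReal (N.cv y) * N.pathProb y (k.reverse ++ [x]) := by
  induction k generalizing x with
  | nil => simpa [pathProb] using N.ofReal_cv_mul_p_comm x y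
  | cons a k ih =>
    calc ENNReal.ofReal (N.cv x) * (N.p x a * N.pathProb a (k ++ [y]))
      _ = ENNReal.ofReal (N.cv a) * N.pathProb a (k ++ [y]) * N.p a x := by
        rw [← mul_assoc, ofReal_cv_mul_p_comm, mul_right_comm]
      _ = ENNReal.ofReal (N.cv y) * (N.pathProb y (k.reverse ++ [a]) * N.p a x) := by
        rw [ih, mul_assoc]
      _ = ENNReal.ofReal (N.cv y) * N.pathProb y ((a :: k).reverse ++ [x]) := by
        rw [List.reverse_cons, pathProb_concat N y x, List.getLastD_concat]

lemma ofReal_cv_mul_greenKer_comm (x y : V) :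
    ENNReal.ofReal (N.cv x) * N.GreenKer x y = ENNReal.ofReal (N.cv y) * N.GreenKer y x := by
  simp only [GreenKer, tsum_getLast?_eq_some_and _ (fun l => N.o ∉ _ :: l), mul_add,
    ← ENNReal.tsum_mul_left]
  congr 1
  · by_cases hxy : x = y
    · rw [hxy]
    · simp [hxy, Ne.symm hxy]
  · rw [← (List.reverse_involutive.toPerm _).tsum_eq]
    refine tsum_congr fun k => ?_
    have mem_comm : N.o ∈ x :: (k.reverse ++ [y]) ↔ N.o ∈ y :: (k ++ [x]) := by
      simp only [List.mem_cons, List.mem_append, List.mem_reverse, List.not_mem_nil]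
      tauto
    simp only [Function.Involutive.coe_toPerm, mem_comm, mul_ite, mul_zero,
      N.ofReal_cv_mul_pathProb_reverse x y, List.reverse_reverse]

end Reversibility

section KilledWalk

/-- The probability that the walk killed at the root, started at `x`, survives and begins with the
steps `l`. The starting point counts: a walk started at the root is dead from the outset. -/
def killedPathProb (x : V) (l : List V) : ℝ≥0∞ :=
  if N.o ∈ x :: l then 0 else N.pathProb x l

lemma killedPathProb_root (l : List V) : N.killedPathProb N.o l = 0 := by
  simp [killedPathProb]

lemma greenKer_eq_tsum (x y : V) :
    N.GreenKer x y = ∑' l : List V, if l.getLastD x = y then N.killedPathProb x l else 0 := by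
  rw [GreenKer, ← ite_add_tsum_getLast?_eq_some, tsum_subtype_eq_tsum_ite,
    tsum_subtype_eq_tsum_ite]
  congr 1
  · simp [killedPathProb, pathProb, ite_and, eq_comm]
  · refine tsum_congr fun l => ?_
    simp only [killedPathProb, ite_and, ite_not]

variable {N}

lemma killedPathProb_nil {x : V} (hx : x ≠ N.o) : N.killedPathProb x [] = 1 := by
  simp [killedPathProb, pathProb, hx.symm]

lemma killedPathProb_cons {x : V} (hx : x ≠ N.o) (a : V) (l : List V) :
    N.killedPathProb x (a :: l) = N.p x a * N.killedPathProb a l := by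
  simp [killedPathProb, pathProb, hx.symm]

lemma hitProb_root_eq_tsum_greenKer {v : V} (hv : v ≠ N.o) :
    N.hitProb v N.o = ∑' x, N.GreenKer v x * N.p x N.o := by
  have last_step (k : List V) :
      (if N.o ∉ (k ++ [N.o]).dropLast then N.pathProb v (k ++ [N.o]) else 0) =
        N.killedPathProb v k * N.p (k.getLastD v) N.o := by
    simp [killedPathProb, pathProb_concat, hv.symm]
  calc N.hitProb v N.o
    _ = ∑' k : List V, N.killedPathProb v k * N.p (k.getLastD v) N.o := by
      rw [hitProb, if_neg hv, tsum_getLast?_eq_some_and _ (fun l => N.o ∉ l.dropLast)]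
      exact tsum_congr last_step
    _ = ∑' (k : List V) (x : V),
          (if k.getLastD v = x then N.killedPathProb v k else 0) * N.p x N.o := by
      simp only [ite_mul, zero_mul, tsum_ite_eq']
    _ = ∑' x, N.GreenKer v x * N.p x N.o := by
      rw [ENNReal.tsum_comm]
      simp only [ENNReal.tsum_mul_right, greenKer_eq_tsum]

lemma tsum_ofReal_c_root_mul_greenKer {v : V} (hv : v ≠ N.o) :
    ∑' x, ENNReal.ofReal (N.c N.o x) * N.GreenKer x v =
      ENNReal.ofReal (N.cv v) * N.hitProb v N.o := by
  rw [hitProb_root_eq_tsum_greenKer hv, ← ENNReal.tsum_mul_left]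
  refine tsum_congr fun x => ?_
  calc ENNReal.ofReal (N.c N.o x) * N.GreenKer x v
    _ = ENNReal.ofReal (N.cv x) * N.GreenKer x v * N.p x N.o := by
      rw [N.c_symm, ← ofReal_cv_mul_p, mul_right_comm]
    _ = ENNReal.ofReal (N.cv v) * (N.GreenKer v x * N.p x N.o) := by
      rw [ofReal_cv_mul_greenKer_comm, mul_assoc]

end KilledWalk

section DoobTransform

variable {N} {h : V → ℝ}

lemma c_eq_zero_of_lap_nonpos (h_nonneg : ∀ v, 0 ≤ h v) {x y : V} (h_super : N.lap h x ≤ 0)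
    (hx : h x = 0) (hy : 0 < h y) : N.c x y = 0 := by
  have c_mul_le_zero : N.c x y * h y ≤ 0 :=
    calc N.c x y * h y
      _ ≤ ∑' z, N.c x z * h z :=
        (N.summable_c_mul x h).le_tsum y fun z _ => mul_nonneg (N.c_nonneg x z) (h_nonneg z)
      _ = N.lap h x := by simp only [lap, hx, sub_zero]
      _ ≤ 0 := h_super
  exact le_antisymm (nonpos_of_mul_nonpos_left c_mul_le_zero hy) (N.c_nonneg x y)

lemma killedPathProb_eq_zero_of_lap_nonpos (h_nonneg : ∀ v, 0 ≤ h v)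
    (h_super : ∀ v ≠ N.o, N.lap h v ≤ 0) {x : V} {l : List V} (hx : h x = 0)
    (h_last : 0 < h (l.getLastD x)) : N.killedPathProb x l = 0 := by
  obtain rfl | hxo := eq_or_ne x N.o
  · exact N.killedPathProb_root l
  induction l generalizing x with
  | nil => exact absurd hx h_last.ne'
  | cons a l ih =>
    rw [killedPathProb_cons hxo]
    obtain ha | ha := (h_nonneg a).eq_or_lt
    · obtain rfl | hao := eq_or_ne a N.o
      · rw [killedPathProb_root, mul_zero]
      · rw [ih ha.symm (by rwa [List.getLastD_cons] at h_last) hao, mul_zero]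
    · simp [p, c_eq_zero_of_lap_nonpos h_nonneg (h_super x hxo) hx ha]

lemma ofReal_mul_hp {x : V} (hx : 0 < h x) (y : V) :
    ENNReal.ofReal (h x) * N.hp h x y = N.p x y * ENNReal.ofReal (h y) := by
  rw [hp, mul_left_comm, ← ENNReal.ofReal_mul hx.le, mul_div_cancel₀ _ hx.ne']

lemma ofReal_mul_hPathProb (h_nonneg : ∀ v, 0 ≤ h v) (h_root : h N.o = 0)
    (h_super : ∀ v ≠ N.o, N.lap h v ≤ 0) {x : V} {l : List V} (h_last : 0 < h (l.getLastD x)) :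
    ENNReal.ofReal (h x) * N.hPathProb h x l =
      ENNReal.ofReal (h (l.getLastD x)) * N.killedPathProb x l := by
  induction l generalizing x with
  | nil =>
    have hxo : x ≠ N.o := by rintro rfl; exact h_last.ne' h_root
    rw [killedPathProb_nil hxo, hPathProb, List.getLastD_nil]
  | cons a l ih =>
    obtain hx | hx := (h_nonneg x).eq_or_lt
    · rw [killedPathProb_eq_zero_of_lap_nonpos h_nonneg h_super hx.symm h_last, ← hx]
      simp
    have hxo : x ≠ N.o := by rintro rfl; exact hx.ne' h_root
    rw [List.getLastD_cons] at h_last ⊢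
    rw [hPathProb, ← mul_assoc, ofReal_mul_hp hx, mul_assoc, ih h_last, killedPathProb_cons hxo,
      mul_left_comm]

lemma hGreen_eq_tsum (x y : V) :
    N.hGreen h x y = ∑' l : List V, if l.getLastD x = y then N.hPathProb h x l else 0 := by
  rw [hGreen, ← ite_add_tsum_getLast?_eq_some]
  rfl

lemma ofReal_mul_hGreen (h_nonneg : ∀ v, 0 ≤ h v) (h_root : h N.o = 0)
    (h_super : ∀ v ≠ N.o, N.lap h v ≤ 0) {v : V} (hv : 0 < h v) (x : V) :
    ENNReal.ofReal (h x) * N.hGreen h x v = ENNReal.ofReal (h v) * N.GreenKer x v := by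
  simp only [hGreen_eq_tsum, greenKer_eq_tsum, ← ENNReal.tsum_mul_left, mul_ite, mul_zero]
  refine tsum_congr fun l => if_ctx_congr Iff.rfl (fun h_end => ?_) fun _ => rfl
  subst h_end
  exact ofReal_mul_hPathProb h_nonneg h_root h_super hv

end DoobTransform

end RootedNetwork

open RootedNetwork in
theorem hGreen_mu_eq_general {V : Type*} (N : RootedNetwork V) (h : V → ℝ)
    (h_nonneg : ∀ v, 0 ≤ h v) (h_root : h N.o = 0) (h_super : ∀ v ≠ N.o, N.lap h v ≤ 0)
    (v : V) (hv : 0 < h v) :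
    (∑' x : V, ENNReal.ofReal (N.c N.o x * h x) * N.hGreen h x v)
      = ENNReal.ofReal (h v * N.cv v) * N.hitProb v N.o := by
  have hvo : v ≠ N.o := by rintro rfl; exact hv.ne' h_root
  have doob_transform (x : V) : ENNReal.ofReal (N.c N.o x * h x) * N.hGreen h x v =
      ENNReal.ofReal (h v) * (ENNReal.ofReal (N.c N.o x) * N.GreenKer x v) := by
    rw [ENNReal.ofReal_mul (N.c_nonneg _ _), mul_assoc,
      ofReal_mul_hGreen h_nonneg h_root h_super hv, mul_left_comm]
  simp only [doob_transform]
  rw [ENNReal.tsum_mul_left, tsum_ofReal_c_root_mul_greenKer hvo, ENNReal.ofReal_mul hv.le,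
    mul_assoc]

/-- On a recurrent rooted network with potential `h`, for the initial measure
`μ_h(x) = c_{ox} h(x)` on the neighbors of `o` one has
`G^h(μ_h, v) = Σ_x μ_h(x) G^h(x,v) = h(v) · c_v` for every `v ∈ S_h`. -/
theorem hGreen_mu_eq {V : Type*} (N : RootedNetwork V)
    (hrec : N.Recurrent) (h : V → ℝ) (hpot : N.IsPotential h)
    (v : V) (hv : 0 < h v) :
    (∑' x : V, ENNReal.ofReal (N.c N.o x * h x) * N.hGreen h x v)
      = ENNReal.ofReal (h v * N.cv v) := by
  obtain ⟨h_nonneg, h_root, -, h_harmonic⟩ := hpot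
  rw [hGreen_mu_eq_general N h h_nonneg h_root (fun u hu => (h_harmonic u hu).le) v hv, hrec v,
    mul_one]
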